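/- Let X and Z be independent Expo(λ) random variables, let a ∈ ℝ, and let c ∈ ℝ with a ≤ c. Define V := a + X if a + X < c, and V := c + Z if a + X ≥ c. Then V has the same distribution as a + X; that is, the law of V is the pushforward of Expo(λ) under the map x ↦ a + x. -/

import Mathlib

open MeasureTheory ProbabilityTheory Real

/-!
The exponential density satisfies `p (s + x) = exp (-(r * s)) * p x` for `s, x ≥ 0`, so the
restriction of `Expo(r)` to `[s, ∞)` is a multiple of its translate by `s`. Resampling a variable
on an event does not change its law when the fresh sample has the conditional law given that event,
and `c + Z` has the law of `a + X` given `X ≥ c - a` by the above with `s = c - a`.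
-/

theorem map_withDensity_comp {α β : Type*} [MeasurableSpace α] [MeasurableSpace β] (μ : Measure α)
    {g : α → β} {φ : β → ENNReal} (hg : Measurable g) (hφ : Measurable φ) :
    (μ.withDensity (φ ∘ g)).map g = (μ.map g).withDensity φ := by
  ext t ht
  rw [Measure.map_apply hg ht, withDensity_apply _ (hg ht), withDensity_apply _ ht,
    setLIntegral_map ht hφ hg]
  rfl

section Resampling

variable {α β γ : Type*} [MeasurableSpace α] [MeasurableSpace β] [MeasurableSpace γ]
  {μ : Measure α} {ν : Measure β} [SFinite μ] {p : α → Prop} [DecidablePred p]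
  {f : α → γ} {g : β → γ}

theorem map_ite_prod [SFinite ν] (hp : MeasurableSet {x | p x}) (hf : Measurable f)
    (hg : Measurable g) :
    (μ.prod ν).map (fun w => if p w.1 then f w.1 else g w.2)
      = ν Set.univ • (μ.restrict {x | p x}).map f + μ {x | p x}ᶜ • ν.map g := by
  have hite : Measurable fun w : α × β => if p w.1 then f w.1 else g w.2 :=
    Measurable.ite (measurable_fst hp) (hf.comp measurable_fst) (hg.comp measurable_snd)
  have map_pos : ((μ.restrict {x | p x}).prod ν).map (fun w => if p w.1 then f w.1 else g w.2)
      = ν Set.univ • (μ.restrict {x | p x}).map f := by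
    have hae : (fun w => if p w.1 then f w.1 else g w.2)
        =ᵐ[(μ.restrict {x | p x}).prod ν] f ∘ Prod.fst :=
      (Measure.quasiMeasurePreserving_fst.ae (ae_restrict_mem hp)).mono fun _ hw => if_pos hw
    rw [Measure.map_congr hae, ← Measure.map_map hf measurable_fst, Measure.map_fst_prod,
      Measure.map_smul]
  have map_neg : ((μ.restrict {x | p x}ᶜ).prod ν).map (fun w => if p w.1 then f w.1 else g w.2)
      = μ {x | p x}ᶜ • ν.map g := by
    have hae : (fun w => if p w.1 then f w.1 else g w.2)
        =ᵐ[(μ.restrict {x | p x}ᶜ).prod ν] g ∘ Prod.snd :=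
      (Measure.quasiMeasurePreserving_fst.ae (ae_restrict_mem hp.compl)).mono fun _ hw => if_neg hw
    rw [Measure.map_congr hae, ← Measure.map_map hg measurable_snd, Measure.map_snd_prod,
      Measure.map_smul, Measure.restrict_apply_univ]
  rw [← map_pos, ← map_neg, ← Measure.map_add _ _ hite, ← Measure.add_prod,
    Measure.restrict_add_restrict_compl hp]

theorem map_ite_prod_eq_map [IsProbabilityMeasure ν]
    (hp : MeasurableSet {x | p x}) (hf : Measurable f) (hg : Measurable g)
    (hfg : (μ.restrict {x | p x}ᶜ).map f = μ {x | p x}ᶜ • ν.map g) :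
    (μ.prod ν).map (fun w => if p w.1 then f w.1 else g w.2) = μ.map f := by
  rw [map_ite_prod hp hf hg, measure_univ, one_smul, ← hfg, ← Measure.map_add _ _ hf,
    Measure.restrict_add_restrict_compl hp]

end Resampling

section Memoryless

variable {r s : ℝ}

theorem indicator_Ici_exponentialPDF_add (hs : 0 ≤ s) (x : ℝ) :
    (Set.Ici s).indicator (exponentialPDF r) (s + x)
      = ENNReal.ofReal (exp (-(r * s))) * exponentialPDF r x := by
  rcases lt_or_ge x 0 with hx | hx
  · have hsx : s + x ∉ Set.Ici s := by simpa using hx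
    rw [Set.indicator_of_notMem hsx, exponentialPDF_of_neg hx, mul_zero]
  · have hsx : s + x ∈ Set.Ici s := by simpa using hx
    rw [Set.indicator_of_mem hsx, exponentialPDF_of_nonneg (add_nonneg hs hx),
      exponentialPDF_of_nonneg hx, ← ENNReal.ofReal_mul (exp_pos _).le, mul_add, neg_add, exp_add,
      mul_left_comm]

theorem expMeasure_restrict_Ici (hs : 0 ≤ s) :
    (expMeasure r).restrict (Set.Ici s)
      = ENNReal.ofReal (exp (-(r * s))) • (expMeasure r).map (s + ·) := by
  have hpdf : Measurable (exponentialPDF r) := (measurable_exponentialPDFReal r).ennreal_ofReal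
  have hdensity : expMeasure r = volume.withDensity (exponentialPDF r) := rfl
  have htranslate : (Set.Ici s).indicator (exponentialPDF r) ∘ (s + ·)
      = ENNReal.ofReal (exp (-(r * s))) • exponentialPDF r :=
    funext (indicator_Ici_exponentialPDF_add hs)
  calc (expMeasure r).restrict (Set.Ici s)
    _ = volume.withDensity ((Set.Ici s).indicator (exponentialPDF r)) := by
      rw [hdensity, restrict_withDensity measurableSet_Ici, withDensity_indicator measurableSet_Ici]
    _ = (volume.map (s + ·)).withDensity ((Set.Ici s).indicator (exponentialPDF r)) := by
      rw [map_add_left_eq_self]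
    _ = (volume.withDensity (ENNReal.ofReal (exp (-(r * s))) • exponentialPDF r)).map (s + ·) := by
      rw [← map_withDensity_comp _ (measurable_const_add s) (hpdf.indicator measurableSet_Ici),
        htranslate]
    _ = ENNReal.ofReal (exp (-(r * s))) • (expMeasure r).map (s + ·) := by
      rw [withDensity_smul _ hpdf, Measure.map_smul, hdensity]

theorem expMeasure_Ici (hr : 0 < r) (hs : 0 ≤ s) :
    expMeasure r (Set.Ici s) = ENNReal.ofReal (exp (-(r * s))) := by
  have := isProbabilityMeasure_expMeasure hr
  rw [← Measure.restrict_apply_univ, expMeasure_restrict_Ici hs, Measure.smul_apply,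
    Measure.map_apply (measurable_const_add s) .univ, Set.preimage_univ, measure_univ, smul_eq_mul,
    mul_one]

theorem expMeasure_memoryless (hr : 0 < r) (hs : 0 ≤ s) :
    (expMeasure r).restrict (Set.Ici s)
      = expMeasure r (Set.Ici s) • (expMeasure r).map (s + ·) := by
  rw [expMeasure_Ici hr hs, expMeasure_restrict_Ici hs]

end Memoryless

/-- Let `X` and `Z` be independent `Expo(lam)` random variables and `a ≤ c`. The random variable
`V`, equal to `a + X` if `a + X < c` and to `c + Z` otherwise, has the same distribution as
`a + X` (memorylessness of the exponential distribution). -/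
theorem shifted_exponential_restart
    (lam : ℝ) (hlam : 0 < lam) (a c : ℝ) (hac : a ≤ c) :
    Measure.map (fun w : ℝ × ℝ => if a + w.1 < c then a + w.1 else c + w.2)
        ((expMeasure lam).prod (expMeasure lam))
      = Measure.map (fun x : ℝ => a + x) (expMeasure lam) := by
  have := isProbabilityMeasure_expMeasure hlam
  have restart_event : {x : ℝ | a + x < c}ᶜ = Set.Ici (c - a) := by
    ext x
    simp [add_comm]
  have shift_comp : (a + ·) ∘ (c - a + ·) = (c + · : ℝ → ℝ) := by
    ext x
    simp only [Function.comp_apply]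
    ring
  apply map_ite_prod_eq_map (measurableSet_lt (measurable_const_add a) measurable_const)
    (measurable_const_add a) (measurable_const_add c)
  rw [restart_event, expMeasure_memoryless hlam (sub_nonneg.2 hac), Measure.map_smul,
    Measure.map_map (measurable_const_add a) (measurable_const_add _), shift_comp]
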